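/- Let α ∈ (1,2), β < α + 1, and λ ∈ ℝ. Then ∫_0^∞ (e^{iλx} − 1 − iλx·1_{{x<1}}) · e^{β x}(e^x − 1)^{−(α+1)} dx = iλ·( ã_β + 1/(α−1) ) + Γ(−α)·( Γ(−iλ + α + 1 − β)/Γ(−iλ + 1 − β) − Γ(α + 1 − β)/Γ(1 − β) ), where ã_β = ∫_0^1 x e^{−x}(1 − e^{−(α−β)x})/(1−e^{−x})^{α+1} dx + ∫_0^1 e^{−x}(1 − x − e^{−x})/(1−e^{−x})^{α+1} dx + ∫_1^∞ e^{−x}/(1−e^{−x})^{α} dx, and Γ is the complex Gamma function (vanishing at nonpositive integers, so ratios at poles are interpreted as 0). -/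

import Mathlib

open MeasureTheory Set
open Asymptotics Filter Topology

lemma v_pos {x : ℝ} (hx : 0 < x) : 0 < 1 - Real.exp (-x) := by
  have : Real.exp (-x) < 1 := by rw [Real.exp_lt_one_iff]; linarith
  linarith

lemma v_ge {x : ℝ} (hx : 0 < x) (hx1 : x ≤ 1) : x * Real.exp (-1) ≤ 1 - Real.exp (-x) := by
  have h1 : x + 1 ≤ Real.exp x := Real.add_one_le_exp x
  have h2 : Real.exp (-1) ≤ Real.exp (-x) := Real.exp_le_exp.2 (by linarith)
  have h3 : Real.exp (-x) * Real.exp x = 1 := by rw [← Real.exp_add]; simp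
  have h4 := Real.exp_pos (-x)
  nlinarith

lemma v_bigO {p : ℝ} (hp : p ≤ 0) :
    (fun x : ℝ => (1 - Real.exp (-x)) ^ p) =O[𝓝[>] 0] (fun x : ℝ => x ^ p) := by
  apply IsBigO.of_bound ((Real.exp (-1)) ^ p)
  filter_upwards [Ioc_mem_nhdsGT (zero_lt_one (α := ℝ))] with x hx
  rw [Real.norm_of_nonneg (Real.rpow_nonneg (v_pos hx.1).le _),
    Real.norm_of_nonneg (Real.rpow_nonneg hx.1.le _), mul_comm,
    ← Real.mul_rpow hx.1.le (Real.exp_pos _).le]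
  exact Real.rpow_le_rpow_of_nonpos (mul_pos hx.1 (Real.exp_pos _)) (v_ge hx.1 hx.2) hp

lemma E_bigO (s : ℂ) :
    (fun x : ℝ => Complex.exp (-s * x) - 1 + s * x) =O[𝓝[>] 0] (fun x : ℝ => x ^ 2) := by
  apply IsBigO.of_bound (‖s‖ ^ 2)
  have h : ∀ᶠ x : ℝ in 𝓝[>] 0, ‖-s * (x : ℂ)‖ < 1 := by
    have : Tendsto (fun x : ℝ => ‖-s * (x : ℂ)‖) (𝓝[>] 0) (𝓝 0) := by
      have : Continuous (fun x : ℝ => ‖-s * (x : ℂ)‖) := by fun_prop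
      have := this.tendsto 0
      simp only [Complex.ofReal_zero, mul_zero, norm_zero] at this
      exact this.mono_left nhdsWithin_le_nhds
    exact this.eventually_lt_const one_pos
  filter_upwards [h] with x hx
  have := Complex.norm_exp_sub_one_sub_id_le hx.le
  have e : Complex.exp (-s * x) - 1 + s * x = Complex.exp (-s * x) - 1 - -s * x := by ring
  rw [e]
  refine this.trans (le_of_eq ?_)
  simp [mul_pow]

lemma E_bigO_real (s : ℝ) :
    (fun x : ℝ => Real.exp (-s * x) - 1 + s * x) =O[𝓝[>] 0] (fun x : ℝ => x ^ 2) := by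
  rw [← Complex.isBigO_ofReal_left]
  refine (E_bigO s).congr_left fun x => ?_
  push_cast; rfl

lemma int01 {E : Type*} [NormedAddCommGroup E] {α : ℝ} (hα : α < 2)
    {f : ℝ → E} (hf : ContinuousOn f (Ioi 0))
    (hO : f =O[𝓝[>] 0] (fun x : ℝ => x ^ (1 - α))) : IntegrableOn f (Ioc 0 1) := by
  have hO' : (fun x => ‖f x‖) =O[𝓝[>] 0] (fun x : ℝ => x ^ (-(α - 1))) := by
    simpa using hO.norm_left
  obtain ⟨c, hc, hi⟩ := mellin_convergent_zero_of_isBigO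
    (hf.norm.aestronglyMeasurable measurableSet_Ioi) hO' (s := 1) (by linarith)
  have h1 : IntegrableOn f (Ioc 0 c) := by
    have : IntegrableOn (fun x => ‖f x‖) (Ioc 0 c) := by simpa using hi
    refine (integrable_norm_iff ?_).1 this
    exact (hf.mono Ioc_subset_Ioi_self).aestronglyMeasurable measurableSet_Ioc
  have h2 : IntegrableOn f (Icc c 1) :=
    (hf.mono fun x hx => lt_of_lt_of_le hc hx.1).integrableOn_Icc
  refine (h1.union h2).mono_set fun x hx => ?_
  rcases le_total x c with h | h
  · exact Or.inl ⟨hx.1, h⟩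
  · exact Or.inr ⟨h, hx.2⟩

lemma v_cont (p : ℝ) : ContinuousOn (fun x : ℝ => (1 - Real.exp (-x)) ^ p) (Ioi 0) := by
  refine ContinuousOn.rpow_const (by fun_prop) fun x hx => Or.inl (v_pos hx).ne'

lemma sq_mul_v_bigO {α : ℝ} (hα : 1 < α) {g : ℝ → ℂ}
    (hO : g =O[𝓝[>] 0] (fun x : ℝ => x ^ 2)) :
    (fun x => g x * (((1 - Real.exp (-x)) ^ (-(α+1)) : ℝ) : ℂ)) =O[𝓝[>] 0]
      (fun x : ℝ => x ^ (1 - α)) := by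
  have h := hO.mul (Complex.isBigO_ofReal_left.2 (v_bigO (p := -(α+1)) (by linarith)))
  refine h.trans (EventuallyEq.isBigO ?_)
  filter_upwards [self_mem_nhdsWithin] with x hx
  rw [← Real.rpow_natCast, ← Real.rpow_add hx]
  congr 1; push_cast; ring

lemma sq_mul_v_int {α : ℝ} (hα : 1 < α) (hα2 : α < 2) {g : ℝ → ℂ} (hg : Continuous g)
    (hO : g =O[𝓝[>] 0] (fun x : ℝ => x ^ 2)) :
    IntegrableOn (fun x => g x * (((1 - Real.exp (-x)) ^ (-(α+1)) : ℝ) : ℂ)) (Ioc 0 1) := by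
  refine int01 hα2 (hg.continuousOn.mul ?_) (sq_mul_v_bigO hα hO)
  exact Complex.continuous_ofReal.comp_continuousOn (v_cont _)

lemma exp_v_int {s : ℂ} (hs : 0 < s.re) {p : ℝ} (hp : p ≤ 0) :
    IntegrableOn (fun x : ℝ => Complex.exp (-s * x) * (((1 - Real.exp (-x)) ^ p : ℝ) : ℂ))
      (Ioi 1) := by
  have hc : ContinuousOn (fun x : ℝ => Complex.exp (-s * x) *
      (((1 - Real.exp (-x)) ^ p : ℝ) : ℂ)) (Ici 1) := by
    refine ContinuousOn.mul (by fun_prop) ?_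
    exact Complex.continuous_ofReal.comp_continuousOn
      ((v_cont _).mono fun x (hx : 1 ≤ x) => lt_of_lt_of_le one_pos hx)
  refine (integrable_norm_iff ((hc.mono Ioi_subset_Ici_self).aestronglyMeasurable
    measurableSet_Ioi)).1 ?_
  refine integrable_of_isBigO_exp_neg hs hc.norm ?_
  apply IsBigO.of_bound ((1 - Real.exp (-1)) ^ p)
  filter_upwards [eventually_ge_atTop 1] with x hx
  have hx0 : 0 < x := by linarith
  rw [norm_norm, norm_mul, Complex.norm_exp, Complex.norm_real,
    Real.norm_of_nonneg (Real.rpow_nonneg (v_pos hx0).le _), Real.norm_of_nonneg (Real.exp_pos _).le,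
    mul_comm]
  have e : (-s * (x:ℂ)).re = -s.re * x := by simp
  rw [e]
  refine mul_le_mul_of_nonneg_right ?_ (Real.exp_pos _).le
  refine Real.rpow_le_rpow_of_nonpos (v_pos one_pos) ?_ hp
  have : Real.exp (-x) ≤ Real.exp (-1) := Real.exp_le_exp.2 (by linarith)
  linarith

lemma exp_image : (fun x : ℝ => Real.exp (-x)) '' (Ioi 0) = Ioo 0 1 := by
  ext y
  constructor
  · rintro ⟨x, hx, rfl⟩
    exact ⟨Real.exp_pos _, by have := v_pos hx; simp only; linarith⟩
  · rintro ⟨h0, h1⟩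
    refine ⟨-Real.log y, ?_, ?_⟩
    · have := Real.log_neg h0 h1
      simp only [mem_Ioi]; linarith
    · simp [Real.exp_log h0]

lemma exp_hasDeriv (x : ℝ) : HasDerivAt (fun x : ℝ => Real.exp (-x)) (-Real.exp (-x)) x := by
  simpa using (hasDerivAt_neg x).exp

lemma beta_int {s : ℂ} (hs : 0 < s.re) {α : ℝ} (hα : α < 2) :
    IntegrableOn (fun x : ℝ => Complex.exp (-s * x) * (((1 - Real.exp (-x)) ^ (1 - α) : ℝ) : ℂ))
      (Ioi 0) ∧
    ∫ x in Ioi (0:ℝ), Complex.exp (-s * x) * (((1 - Real.exp (-x)) ^ (1 - α) : ℝ) : ℂ)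
      = Complex.betaIntegral s (2 - α) := by
  have hd : ∀ x ∈ Ioi (0:ℝ), HasDerivWithinAt (fun x : ℝ => Real.exp (-x)) (-Real.exp (-x))
      (Ioi 0) x := fun x _ => (exp_hasDeriv x).hasDerivWithinAt
  have hinj : InjOn (fun x : ℝ => Real.exp (-x)) (Ioi 0) := by
    intro x _ y _ h
    simpa using h
  have key : ∀ x ∈ Ioi (0:ℝ), |-Real.exp (-x)| • (((Real.exp (-x) : ℝ) : ℂ) ^ (s - 1) *
      (1 - ((Real.exp (-x) : ℝ) : ℂ)) ^ ((2 - α : ℂ) - 1)) =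
      Complex.exp (-s * x) * (((1 - Real.exp (-x)) ^ (1 - α) : ℝ) : ℂ) := by
    intro x hx
    rw [abs_neg, abs_of_pos (Real.exp_pos _), Complex.real_smul, ← mul_assoc]
    congr 1
    · rw [Complex.cpow_def_of_ne_zero (by exact_mod_cast (Real.exp_pos _).ne'),
        ← Complex.ofReal_log (Real.exp_pos _).le, Real.log_exp, Complex.ofReal_exp,
        ← Complex.exp_add]
      congr 1; push_cast; ring
    · rw [Complex.ofReal_cpow (v_pos hx).le]
      push_cast
      congr 1; ring
  have hb := Complex.betaIntegral_convergent (u := s) (v := 2 - α) hs (by simp; linarith)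
  rw [intervalIntegrable_iff_integrableOn_Ioo_of_le zero_le_one, ← exp_image,
    integrableOn_image_iff_integrableOn_abs_deriv_smul measurableSet_Ioi hd hinj] at hb
  constructor
  · exact hb.congr_fun key measurableSet_Ioi
  · rw [Complex.betaIntegral, intervalIntegral.integral_of_le zero_le_one,
      integral_Ioc_eq_integral_Ioo, ← exp_image,
      integral_image_eq_integral_abs_deriv_smul measurableSet_Ioi hd hinj]
    exact (setIntegral_congr_fun measurableSet_Ioi key).symm

lemma beta_gamma {s : ℂ} (hs : 0 < s.re) {α : ℝ} (hα1 : 1 < α) (hα : α < 2) :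
    (α - s) * (α - 1 - s) / (α * (α - 1)) * Complex.betaIntegral s (2 - α)
      = Complex.Gamma (-α) * (Complex.Gamma s / Complex.Gamma (s - α)) := by
  have h0 : (α : ℂ) ≠ 0 := by norm_cast; linarith
  have h1 : (α : ℂ) - 1 ≠ 0 := by
    have : α - 1 ≠ 0 := by linarith
    exact_mod_cast this
  have h2 : (0:ℝ) < (2 - α : ℂ).re := by simp; linarith
  have hb := Complex.Gamma_mul_Gamma_eq_betaIntegral hs h2
  have hne : Complex.Gamma (s + (2 - α)) ≠ 0 :=
    Complex.Gamma_ne_zero_of_re_pos (by rw [Complex.add_re]; linarith)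
  have g1 : Complex.Gamma (2 - α) = (1 - α) * (-α) * Complex.Gamma (-α) := by
    have e1 := Complex.Gamma_add_one (-(α:ℂ)) (by simpa using h0)
    have e2 := Complex.Gamma_add_one (-(α:ℂ) + 1) (by
      intro h; apply h1; linear_combination -h)
    rw [show (2 - α : ℂ) = -α + 1 + 1 by ring, e2, e1]; ring
  have g2 : (Complex.Gamma (s - α))⁻¹ =
      (s - α) * ((s - α + 1) * (Complex.Gamma (s + (2 - α)))⁻¹) := by
    rw [Complex.one_div_Gamma_eq_self_mul_one_div_Gamma_add_one,
      Complex.one_div_Gamma_eq_self_mul_one_div_Gamma_add_one (s - α + 1)]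
    congr 4; ring
  have hB : Complex.betaIntegral s (2 - α) =
      Complex.Gamma s * Complex.Gamma (2 - α) / Complex.Gamma (s + (2 - α)) := by
    rw [hb]; field_simp
  rw [hB, g1, div_eq_mul_inv (Complex.Gamma s), g2]
  field_simp
  ring

noncomputable def nfun (α : ℝ) (s c : ℂ) (x : ℝ) : ℂ :=
  (Complex.exp (-s * x) - Complex.exp (-c * x)) / α +
    (1 - Complex.exp (-1 * x)) * ((α - s) * Complex.exp (-s * x) - (α - c) * Complex.exp (-c * x)
      - (c - s) * α) / (α * (α - 1))

lemma nfun_bigO {α : ℝ} (hα : 1 < α) (s c : ℂ) :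
    nfun α s c =O[𝓝[>] 0] (fun x : ℝ => x ^ 2) := by
  have h0 : (α : ℂ) ≠ 0 := by norm_cast; linarith
  have h1 : (α : ℂ) - 1 ≠ 0 := by
    have : α - 1 ≠ 0 := by linarith
    exact_mod_cast this
  have h := ((((((E_bigO s).sub (E_bigO c)).const_mul_left (α - 1 : ℂ)).add
    (((E_bigO s).sub (E_bigO (s + 1))).const_mul_left (α - s : ℂ))).sub
    (((E_bigO c).sub (E_bigO (c + 1))).const_mul_left (α - c : ℂ))).add
    ((E_bigO 1).const_mul_left ((c - s) * α : ℂ))).const_mul_left ((1 / (α * (α - 1)) : ℂ))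
  refine h.congr_left fun x => ?_
  have e1 : Complex.exp (-(s + 1) * x) = Complex.exp (-s * x) * Complex.exp (-1 * x) := by
    rw [← Complex.exp_add]; ring_nf
  have e2 : Complex.exp (-(c + 1) * x) = Complex.exp (-c * x) * Complex.exp (-1 * x) := by
    rw [← Complex.exp_add]; ring_nf
  rw [e1, e2, nfun]
  field_simp
  ring

lemma nfun_deriv (α : ℝ) (s c : ℂ) (x : ℝ) :
    HasDerivAt (nfun α s c)
      ((-s * Complex.exp (-s * x) + c * Complex.exp (-c * x)) / α +
        (Complex.exp (-1 * x) * ((α - s) * Complex.exp (-s * x) - (α - c) * Complex.exp (-c * x)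
          - (c - s) * α) + (1 - Complex.exp (-1 * x)) *
          (-(α - s) * s * Complex.exp (-s * x) + (α - c) * c * Complex.exp (-c * x)))
          / (α * (α - 1))) x := by
  have he : ∀ t : ℂ, HasDerivAt (fun x : ℝ => Complex.exp (-t * x))
      (Complex.exp (-t * x) * (-t)) x := by
    intro t
    have := ((Complex.ofRealCLM.hasDerivAt (x := x)).const_mul (-t)).cexp
    simpa using this
  have h := (((he s).sub (he c)).div_const (α : ℂ)).add
    ((((he 1).const_sub 1).mul ((((he s).const_mul (α - s : ℂ)).sub
      ((he c).const_mul (α - c : ℂ))).sub_const ((c - s) * α : ℂ))).div_const (α * (α - 1) : ℂ))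
  refine HasDerivAt.congr_deriv h ?_
  simp only [Pi.sub_apply]
  ring

lemma v_pow_step {x : ℝ} (hx : 0 < x) (p : ℝ) :
    (1 - Real.exp (-x)) ^ (p + 1) = (1 - Real.exp (-x)) ^ p * (1 - Real.exp (-x)) := by
  rw [Real.rpow_add_one (v_pos hx).ne']

noncomputable def Afun (α : ℝ) (s c : ℂ) (x : ℝ) : ℂ :=
  (Complex.exp (-s * x) - Complex.exp (-c * x) -
    (c - s) * ((1 - Complex.exp (-1 * x)) * Complex.exp (-1 * x))) *
    (((1 - Real.exp (-x)) ^ (-(α + 1)) : ℝ) : ℂ)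

lemma H_deriv {α : ℝ} (hα : 1 < α) (s c : ℂ) {x : ℝ} (hx : 0 < x) :
    HasDerivAt (fun x : ℝ => nfun α s c x * (((1 - Real.exp (-x)) ^ (-α) : ℝ) : ℂ))
      ((α - s) * (α - 1 - s) / (α * (α - 1)) *
        (Complex.exp (-s * x) * (((1 - Real.exp (-x)) ^ (1 - α) : ℝ) : ℂ)) -
       (α - c) * (α - 1 - c) / (α * (α - 1)) *
        (Complex.exp (-c * x) * (((1 - Real.exp (-x)) ^ (1 - α) : ℝ) : ℂ)) - Afun α s c x) x := by
  have h0 : (α : ℂ) ≠ 0 := by norm_cast; linarith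
  have h1 : (α : ℂ) - 1 ≠ 0 := by
    have : α - 1 ≠ 0 := by linarith
    exact_mod_cast this
  have hv := (((exp_hasDeriv x).const_sub 1).rpow_const (p := -α) (Or.inl (v_pos hx).ne')).ofReal_comp
  have h := (nfun_deriv α s c x).mul hv
  refine HasDerivAt.congr_deriv h ?_
  have e1 : (1 - Real.exp (-x)) ^ (-α) =
      (1 - Real.exp (-x)) ^ (-(α+1)) * (1 - Real.exp (-x)) := by
    rw [← v_pow_step hx]; congr 1; ring
  have e2 : (1 - Real.exp (-x)) ^ (1-α) =
      (1 - Real.exp (-x)) ^ (-(α+1)) * (1 - Real.exp (-x)) * (1 - Real.exp (-x)) := by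
    rw [← e1, ← v_pow_step hx]; congr 1; ring
  have e3 : (1 - Real.exp (-x)) ^ (-α - 1) = (1 - Real.exp (-x)) ^ (-(α+1)) := by
    congr 1; ring
  rw [e1, e2, e3, Afun, nfun]
  generalize (1 - Real.exp (-x)) ^ (-(α+1)) = W
  have e4 : Complex.exp (-1 * x) = ((Real.exp (-x) : ℝ) : ℂ) := by push_cast; congr 1; ring
  rw [e4]
  generalize Real.exp (-x) = E
  generalize Complex.exp (-s * x) = S
  generalize Complex.exp (-c * x) = C
  push_cast
  field_simp
  ring

lemma exp_tendsto {s : ℂ} (hs : 0 < s.re) :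
    Tendsto (fun x : ℝ => Complex.exp (-s * x)) atTop (𝓝 0) := by
  rw [tendsto_zero_iff_norm_tendsto_zero]
  have e : ∀ x : ℝ, ‖Complex.exp (-s * x)‖ = Real.exp (-(s.re * x)) := by
    intro x; rw [Complex.norm_exp]; simp
  simp only [e]
  exact Real.tendsto_exp_neg_atTop_nhds_zero.comp (tendsto_id.const_mul_atTop hs)

lemma A_integrable {α : ℝ} (hα : 1 < α) (hα2 : α < 2) {s c : ℂ} (hs : 0 < s.re) (hc : 0 < c.re) :
    IntegrableOn (Afun α s c) (Ioi 0) := by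
  rw [← Ioc_union_Ioi_eq_Ioi (zero_le_one (α := ℝ))]
  have e2 : ∀ x : ℝ, Complex.exp (-(2:ℂ) * x) = Complex.exp (-1 * x) * Complex.exp (-1 * x) := by
    intro x; rw [← Complex.exp_add]; ring_nf
  refine IntegrableOn.union ?_ ?_
  · refine sq_mul_v_int hα hα2 (by fun_prop) ?_
    have h := ((E_bigO s).sub (E_bigO c)).sub
      (((E_bigO 1).sub (E_bigO 2)).const_mul_left (c - s))
    refine h.congr_left fun x => ?_
    rw [e2]; ring
  · have hp : -(α+1) ≤ 0 := by linarith
    have h := (((exp_v_int hs hp).sub (exp_v_int hc hp)).sub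
      (((exp_v_int (s := 1) (by simp) hp).sub (exp_v_int (s := 2) (by simp) hp)).const_mul (c - s)))
    refine h.congr (Eventually.of_forall fun x => ?_)
    simp only [Pi.sub_apply, Afun]
    rw [e2]; ring

lemma A_integral {α : ℝ} (hα : 1 < α) (hα2 : α < 2) {s c : ℂ} (hs : 0 < s.re) (hc : 0 < c.re) :
    ∫ x in Ioi (0:ℝ), Afun α s c x = (c - s) / (α - 1) +
      Complex.Gamma (-α) * (Complex.Gamma s / Complex.Gamma (s - α) -
        Complex.Gamma c / Complex.Gamma (c - α)) := by
  have h0 : (α : ℂ) ≠ 0 := by norm_cast; linarith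
  have h1 : (α : ℂ) - 1 ≠ 0 := by
    have : α - 1 ≠ 0 := by linarith
    exact_mod_cast this
  have iA := A_integrable hα hα2 hs hc
  have iS := ((beta_int hs hα2).1.const_mul ((α - s) * (α - 1 - s) / (α * (α - 1))))
  have iC := ((beta_int hc hα2).1.const_mul ((α - c) * (α - 1 - c) / (α * (α - 1))))
  have hcont : ContinuousWithinAt (fun x : ℝ => nfun α s c x *
      (((1 - Real.exp (-x)) ^ (-α) : ℝ) : ℂ)) (Ici 0) 0 := by
    rw [← continuousWithinAt_Ioi_iff_Ici]
    have hz : nfun α s c 0 * (((1 - Real.exp (-0)) ^ (-α) : ℝ) : ℂ) = 0 := by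
      simp [nfun]
    rw [ContinuousWithinAt, hz]
    have hO := (nfun_bigO hα s c).mul
      (Complex.isBigO_ofReal_left.2 (v_bigO (p := -α) (by linarith)))
    refine hO.trans_tendsto ?_
    have ht : Tendsto (fun x : ℝ => x ^ (2 - α)) (𝓝[>] 0) (𝓝 0) := by
      have := (Real.continuousAt_rpow_const 0 (2 - α) (Or.inr (by linarith))).tendsto
      rw [Real.zero_rpow (by linarith)] at this
      exact this.mono_left nhdsWithin_le_nhds
    refine ht.congr' ?_
    filter_upwards [self_mem_nhdsWithin] with x hx
    rw [← Real.rpow_natCast, ← Real.rpow_add hx]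
    congr 1
  have hlim : Tendsto (fun x : ℝ => nfun α s c x *
      (((1 - Real.exp (-x)) ^ (-α) : ℝ) : ℂ)) atTop (𝓝 (-(c - s) / (α - 1))) := by
    have t1 : Tendsto (fun x : ℝ => (((1 - Real.exp (-x)) ^ (-α) : ℝ) : ℂ)) atTop (𝓝 1) := by
      have a : Tendsto (fun x : ℝ => 1 - Real.exp (-x)) atTop (𝓝 (1 - 0)) :=
        tendsto_const_nhds.sub Real.tendsto_exp_neg_atTop_nhds_zero
      have b := a.rpow_const (p := -α) (Or.inl (by norm_num))
      have d := (Complex.continuous_ofReal.tendsto _).comp b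
      have z : (((1 - 0 : ℝ) ^ (-α) : ℝ) : ℂ) = 1 := by simp
      rw [z] at d
      exact d
    have ts := exp_tendsto hs
    have tc := exp_tendsto hc
    have tu := exp_tendsto (s := 1) (by simp)
    have tn := ((ts.sub tc).div_const (α : ℂ)).add
      (((tu.const_sub 1).mul (((ts.const_mul (α - s : ℂ)).sub
        (tc.const_mul (α - c : ℂ))).sub_const ((c - s) * α : ℂ))).div_const (α * (α - 1) : ℂ))
    have := tn.mul t1
    have z : ((0 - 0) / (α : ℂ) + (1 - 0) * ((α - s) * 0 - (α - c) * 0 - (c - s) * α) /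
        (α * (α - 1))) * 1 = -(c - s) / (α - 1) := by
      field_simp
      ring
    rw [z] at this
    exact this
  have key := integral_Ioi_of_hasDerivAt_of_tendsto hcont
    (fun x hx => H_deriv hα s c hx) ((iS.sub iC).sub iA) hlim
  have iSC : IntegrableOn (fun x : ℝ => (α - s) * (α - 1 - s) / (α * (α - 1)) *
        (Complex.exp (-s * x) * (((1 - Real.exp (-x)) ^ (1 - α) : ℝ) : ℂ)) -
       (α - c) * (α - 1 - c) / (α * (α - 1)) *
        (Complex.exp (-c * x) * (((1 - Real.exp (-x)) ^ (1 - α) : ℝ) : ℂ))) (Ioi 0) := iS.sub iC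
  rw [integral_sub iSC iA, integral_sub iS iC, integral_const_mul, integral_const_mul,
    (beta_int hs hα2).2, (beta_int hc hα2).2, beta_gamma hs hα hα2, beta_gamma hc hα hα2] at key
  have hz : nfun α s c 0 * (((1 - Real.exp (-0)) ^ (-α) : ℝ) : ℂ) = 0 := by
      simp [nfun]
  rw [hz] at key
  linear_combination -key

lemma real_int01 {α : ℝ} (hα : 1 < α) (hα2 : α < 2) {g : ℝ → ℝ} (hg : Continuous g)
    (hO : g =O[𝓝[>] 0] (fun x : ℝ => x ^ 2)) :
    IntegrableOn (fun x => g x / (1 - Real.exp (-x)) ^ (α + 1)) (Ioc 0 1) := by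
  have h := (sq_mul_v_int hα hα2 (g := fun x => (g x : ℂ)) (by fun_prop)
    (Complex.isBigO_ofReal_left.2 hO)).re
  refine IntegrableOn.congr_fun h ?_ measurableSet_Ioc
  intro x hx
  simp only
  rw [← Complex.ofReal_mul, Real.rpow_neg (v_pos hx.1).le]
  simp only [div_eq_mul_inv]
  exact Complex.ofReal_re _

lemma exp_bigO_one (s : ℝ) :
    (fun x : ℝ => Real.exp (-s * x) - 1) =O[𝓝[>] 0] (fun x : ℝ => x) := by
  have h2 : (fun x : ℝ => x ^ 2) =O[𝓝[>] 0] (fun x : ℝ => x) := by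
    apply IsBigO.of_bound 1
    filter_upwards [Ioc_mem_nhdsGT (zero_lt_one (α := ℝ))] with x hx
    rw [Real.norm_of_nonneg (by positivity), Real.norm_of_nonneg hx.1.le]
    nlinarith [hx.1, hx.2]
  have h := ((E_bigO_real s).trans h2).sub ((isBigO_refl (fun x : ℝ => x) (𝓝[>] 0)).const_mul_left s)
  refine h.congr_left fun x => by ring

theorem lamperti_stable_characteristic_exponent_large_index
    (α β l a : ℝ) (hα : α ∈ Set.Ioo (1:ℝ) 2) (hβ : β < α + 1)
    (ha : a =
      (∫ x in (0:ℝ)..1,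
          x * Real.exp (-x) * (1 - Real.exp (-(α - β) * x)) / (1 - Real.exp (-x)) ^ (α + 1))
        + (∫ x in (0:ℝ)..1,
            Real.exp (-x) * (1 - x - Real.exp (-x)) / (1 - Real.exp (-x)) ^ (α + 1))
        + ∫ x in Set.Ioi (1:ℝ), Real.exp (-x) / (1 - Real.exp (-x)) ^ α) :
    ∫ x in Set.Ioi (0:ℝ),
        (Complex.exp (Complex.I * l * x) - 1 - Complex.I * l * x * (if x < 1 then 1 else 0)) *
          ((Real.exp (β * x) * (Real.exp x - 1) ^ (-(α + 1)) : ℝ) : ℂ)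
      = Complex.I * l * (a + 1 / (α - 1)) +
          Complex.Gamma (-α) *
            (Complex.Gamma (-(Complex.I * l) + α + 1 - β) /
                Complex.Gamma (-(Complex.I * l) + 1 - β)
              - Complex.Gamma (α + 1 - β) / Complex.Gamma (1 - β)) := by
  obtain ⟨h1, h2⟩ := hα
  -- the three real pieces
  have sq : (fun x : ℝ => x * x) = fun x => x ^ 2 := by ext x; ring
  have i1 : IntegrableOn (fun x : ℝ => x * Real.exp (-x) * (1 - Real.exp (-(α - β) * x)) /
      (1 - Real.exp (-x)) ^ (α + 1)) (Ioc 0 1) := by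
    refine real_int01 h1 h2 (by fun_prop) ?_
    have h := (isBigO_refl (fun x : ℝ => x) (𝓝[>] 0)).mul
      ((exp_bigO_one 1).sub (exp_bigO_one (1 + (α - β))))
    rw [sq] at h
    refine h.congr_left fun x => ?_
    have : Real.exp (-(1 + (α - β)) * x) = Real.exp (-x) * Real.exp (-(α - β) * x) := by
      rw [← Real.exp_add]; ring_nf
    rw [this, show -(1:ℝ) * x = -x by ring]; ring
  have i2 : IntegrableOn (fun x : ℝ => Real.exp (-x) * (1 - x - Real.exp (-x)) /
      (1 - Real.exp (-x)) ^ (α + 1)) (Ioc 0 1) := by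
    refine real_int01 h1 h2 (by fun_prop) ?_
    have h := (isBigO_refl (fun x : ℝ => x) (𝓝[>] 0)).mul (exp_bigO_one 1)
    rw [sq] at h
    have h := ((E_bigO_real 1).sub (E_bigO_real 2)).sub h
    refine h.congr_left fun x => ?_
    have : Real.exp (-2 * x) = Real.exp (-x) * Real.exp (-x) := by
      rw [← Real.exp_add]; ring_nf
    rw [this, show -(1:ℝ) * x = -x by ring]; ring
  have i3 : IntegrableOn (fun x : ℝ => Real.exp (-x) / (1 - Real.exp (-x)) ^ α) (Ioi 1) := by
    have h := (exp_v_int (s := 1) (by simp) (p := -α) (by linarith)).re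
    refine IntegrableOn.congr_fun h ?_ measurableSet_Ioi
    intro x hx
    have hx0 : 0 < x := lt_trans one_pos hx
    simp only
    have e4 : Complex.exp (-1 * x) = ((Real.exp (-x) : ℝ) : ℂ) := by push_cast; congr 1; ring
    rw [e4, ← Complex.ofReal_mul, Real.rpow_neg (v_pos hx0).le]
    simp only [div_eq_mul_inv]
    exact Complex.ofReal_re _
  set D : ℝ → ℝ := fun x => if x < 1 then
      x * Real.exp (-x) * (1 - Real.exp (-(α - β) * x)) / (1 - Real.exp (-x)) ^ (α + 1) +
      Real.exp (-x) * (1 - x - Real.exp (-x)) / (1 - Real.exp (-x)) ^ (α + 1)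
    else Real.exp (-x) / (1 - Real.exp (-x)) ^ α with hD
  have c1 : EqOn (fun x : ℝ => 
      x * Real.exp (-x) * (1 - Real.exp (-(α - β) * x)) / (1 - Real.exp (-x)) ^ (α + 1) +
      Real.exp (-x) * (1 - x - Real.exp (-x)) / (1 - Real.exp (-x)) ^ (α + 1)) D (Ioo 0 1) := by
    intro x hx
    simp only [hD, if_pos hx.2]
  have c2 : EqOn (fun x : ℝ => Real.exp (-x) / (1 - Real.exp (-x)) ^ α) D (Ici 1) := by
    intro x hx
    simp only [hD, if_neg (not_lt.2 (mem_Ici.1 hx))]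
  have j12 := (i1.mono_set Ioo_subset_Ioc_self).add (i2.mono_set Ioo_subset_Ioc_self)
  have d1 : IntegrableOn D (Ioo 0 1) := IntegrableOn.congr_fun j12 c1 measurableSet_Ioo
  have d2 : IntegrableOn D (Ici 1) :=
    IntegrableOn.congr_fun ((integrableOn_Ici_iff_integrableOn_Ioi).2 i3) c2 measurableSet_Ici
  have hU : Ioo (0:ℝ) 1 ∪ Ici 1 = Ioi 0 := Ioo_union_Ici_eq_Ioi one_pos
  have dI : IntegrableOn D (Ioi 0) := by rw [← hU]; exact d1.union d2
  have dA : ∫ x in Ioi (0:ℝ), D x = a := by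
    rw [← hU, setIntegral_union (by
        rw [Set.disjoint_left]; intro x hx hx'; exact absurd hx.2 (not_lt.2 hx'))
      measurableSet_Ici d1 d2, ← setIntegral_congr_fun measurableSet_Ioo c1,
      ← setIntegral_congr_fun measurableSet_Ici c2, integral_Ici_eq_integral_Ioi,
      integral_add (i1.mono_set Ioo_subset_Ioc_self) (i2.mono_set Ioo_subset_Ioc_self), ha,
      intervalIntegral.integral_of_le zero_le_one, intervalIntegral.integral_of_le zero_le_one,
      integral_Ioc_eq_integral_Ioo, integral_Ioc_eq_integral_Ioo]
  set c : ℂ := α + 1 - β with hc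
  set s : ℂ := c - Complex.I * l with hs
  have hcre : 0 < c.re := by simp [hc]; linarith
  have hsre : 0 < s.re := by simp [hs, hc]; linarith
  have hT : ∀ x ∈ Ioi (0:ℝ), (Complex.exp (Complex.I * l * x) - 1 -
      Complex.I * l * x * (if x < 1 then 1 else 0)) *
          ((Real.exp (β * x) * (Real.exp x - 1) ^ (-(α + 1)) : ℝ) : ℂ) =
      Afun α s c x + Complex.I * l * (D x : ℂ) := by
    intro x hx
    have hx0 : 0 < x := hx
    have hv := v_pos hx0
    have w : Real.exp (β * x) * (Real.exp x - 1) ^ (-(α + 1)) =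
        Real.exp (-(α + 1 - β) * x) * (1 - Real.exp (-x)) ^ (-(α+1)) := by
      have e : Real.exp x - 1 = Real.exp x * (1 - Real.exp (-x)) := by
        rw [mul_sub, ← Real.exp_add]; simp
      rw [e, Real.mul_rpow (Real.exp_pos _).le hv.le, ← Real.exp_mul, ← mul_assoc,
        ← Real.exp_add]
      congr 2; ring
    have hDx : D x = (Real.exp (-x) * (1 - Real.exp (-x)) -
        (if x < 1 then 1 else 0) * (x * Real.exp (-(α + 1 - β) * x))) *
          (1 - Real.exp (-x)) ^ (-(α+1)) := by
      have e : Real.exp (-(α + 1 - β) * x) = Real.exp (-x) * Real.exp (-(α - β) * x) := by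
        rw [← Real.exp_add]; ring_nf
      simp only [hD]
      split_ifs with h
      · rw [Real.rpow_neg hv.le, e]; ring
      · have e1 : ((1 - Real.exp (-x)) ^ α)⁻¹ =
            (1 - Real.exp (-x)) ^ (-(α+1)) * (1 - Real.exp (-x)) := by
          rw [← v_pow_step hx0, ← Real.rpow_neg hv.le]; congr 1; ring
        rw [div_eq_mul_inv, e1]; ring
    have es : Complex.exp (-s * x) = Complex.exp (Complex.I * l * x) * Complex.exp (-c * x) := by
      rw [← Complex.exp_add, hs]; ring_nf
    have ec : ((Real.exp (-(α + 1 - β) * x) : ℝ) : ℂ) = Complex.exp (-c * x) := by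
      rw [hc]; push_cast; rfl
    have e4 : Complex.exp (-1 * x) = ((Real.exp (-x) : ℝ) : ℂ) := by push_cast; congr 1; ring
    have hcs : c - s = Complex.I * l := by rw [hs]; ring
    rw [w, hDx, Afun, es, e4, hcs]
    simp only [Complex.ofReal_mul, Complex.ofReal_sub, ec]
    split_ifs <;> push_cast <;> ring
  have dC : IntegrableOn (fun x => Complex.I * l * (D x : ℂ)) (Ioi 0) := 
    Integrable.const_mul dI.ofReal _
  rw [setIntegral_congr_fun measurableSet_Ioi hT,
    integral_add (A_integrable h1 h2 hsre hcre) dC, integral_const_mul,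
    integral_complex_ofReal, dA, A_integral h1 h2 hsre hcre]
  rw [show -(Complex.I * l) + α + 1 - β = s by rw [hs, hc]; ring,
    show -(Complex.I * l) + 1 - β = s - α by rw [hs, hc]; ring,
    show (1 : ℂ) - β = c - α by rw [hc]; ring,
    show c - s = Complex.I * l by rw [hs]; ring]
  ring
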